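/- Let (M, O, O*) be a finitary binary oriented matroid with ground set E, and let e₀ ∈ E be such that no positive signed circuit C ∈ O has e₀ in its domain. Then there exists a set F ⊆ E with e₀ ∈ F such that Σ_{e ∈ F ∩ dom(C)} C(e) = 0 for every C ∈ O. -/

import Mathlib

open Set Function

variable {α : Type*}

/-- A circuit of a matroid `M`: a minimal dependent set. A cocircuit of `M` is a
circuit of the dual matroid `M✶`. -/
def Matroid.IsCircuitSet (M : Matroid α) (C : Set α) : Prop := Minimal M.Dep C

/-- A signed set, encoded as an integer-valued function taking values `1` or `-1` on its
support (which plays the role of the domain of the signed set) and `0` elsewhere. -/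
def IsSignedSet (g : α → ℤ) : Prop := ∀ e ∈ Function.support g, g e = 1 ∨ g e = -1

/-- A signed set is positive if it is constantly `+1` on its domain. -/
def IsPositive (g : α → ℤ) : Prop := ∀ e ∈ Function.support g, g e = 1

/-- `O` is a signature of the set-system `𝒞`: it consists of exactly two signings of each
member of `𝒞`, these two being negatives of each other, and nothing else. -/
structure IsSignature (𝒞 : Set (Set α)) (O : Set (α → ℤ)) : Prop where
  signed : ∀ g ∈ O, IsSignedSet g
  dom_mem : ∀ g ∈ O, Function.support g ∈ 𝒞
  exists_signing : ∀ C ∈ 𝒞, ∃ g ∈ O, Function.support g = C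
  neg_mem : ∀ g ∈ O, -g ∈ O
  eq_or_eq_neg : ∀ g ∈ O, ∀ h ∈ O, Function.support g = Function.support h → h = g ∨ h = -g

/-- `(M, O, Ostar)` is an oriented matroid: `O` is a signature of the circuits of `M`,
`Ostar` is a signature of the cocircuits of `M`, and orthogonality holds: whenever the
domains of `C ∈ O` and `D ∈ Ostar` intersect, the restriction of `C` to the (finite)
intersection is neither equal to, nor the negative of, the restriction of `D`. -/
structure IsOrientation (M : Matroid α) (O Ostar : Set (α → ℤ)) : Prop where
  circuit_signature : IsSignature {C | M.IsCircuitSet C} O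
  cocircuit_signature : IsSignature {D | M✶.IsCircuitSet D} Ostar
  orthogonality : ∀ C ∈ O, ∀ D ∈ Ostar,
    (Function.support C ∩ Function.support D).Nonempty →
      (¬ ∀ e ∈ Function.support C ∩ Function.support D, C e = D e) ∧
      (¬ ∀ e ∈ Function.support C ∩ Function.support D, C e = - D e)

/-- The oriented matroid is binary: `∑_{e ∈ dom C ∩ dom D} C(e)·D(e) = 0` for every
signed circuit `C ∈ O` and signed cocircuit `D ∈ Ostar` (a finite sum, since circuits
of a finitary matroid are finite). -/
def IsBinaryOrientation (O Ostar : Set (α → ℤ)) : Prop :=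
  ∀ C ∈ O, ∀ D ∈ Ostar, ∑ᶠ e, C e * D e = 0

/-- The oriented matroid is balanced: in every signed cocircuit, the set of positive
elements and the set of negative elements have the same cardinality. -/
def IsBalanced (Ostar : Set (α → ℤ)) : Prop :=
  ∀ D ∈ Ostar, Cardinal.mk {e : α | D e = 1} = Cardinal.mk {e : α | D e = -1}

/-- An element outside the closure of `B` lies on a cocircuit avoiding `B`. -/
lemma exists_cocircuit_avoiding (M : Matroid α) (B : Set α) (e : α) (he : e ∈ M.E)
    (heB : e ∉ M.closure B) : ∃ K, M.IsCocircuit K ∧ e ∈ K ∧ Disjoint K B := by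
  obtain ⟨I, hI⟩ := M.exists_isBasis' B
  rw [← hI.closure_eq_closure] at heB
  have hIe : M.Indep (insert e I) := by
    rw [hI.indep.insert_indep_iff]
    exact Or.inl ⟨he, heB⟩
  have heI : e ∉ I := fun h => heB (M.mem_closure_of_mem h hI.indep.subset_ground)
  obtain ⟨S, hS, hIS⟩ := hIe.exists_isBase_superset
  have heS : e ∈ S := hIS (mem_insert _ _)
  refine ⟨_, hS.compl_closure_sdiff_singleton_isCocircuit heS,
    ⟨he, hS.indep.notMem_closure_sdiff_of_mem heS⟩, ?_⟩
  rw [Set.disjoint_left]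
  rintro x ⟨hxE, hx⟩ hxB
  apply hx
  have h1 : x ∈ M.closure B := M.mem_closure_of_mem' hxB hxE
  rw [← hI.closure_eq_closure] at h1
  refine M.closure_subset_closure ?_ h1
  intro y hy
  exact ⟨hIS (mem_insert_of_mem _ hy), fun h => heI (h ▸ hy)⟩

/-- Normalise a signing so that it is `1` at a given element of its domain. -/
lemma IsSignature.exists_one {𝒞 : Set (Set α)} {O : Set (α → ℤ)} (h : IsSignature 𝒞 O)
    {C : Set α} (hC : C ∈ 𝒞) {e : α} (he : e ∈ C) :
    ∃ g ∈ O, Function.support g = C ∧ g e = 1 := by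
  obtain ⟨g, hg, rfl⟩ := h.exists_signing C hC
  rcases h.signed g hg e he with h1 | h1
  · exact ⟨g, hg, rfl, h1⟩
  · exact ⟨-g, h.neg_mem g hg, by simp, by simp [h1]⟩

/-- Minty's painting lemma, for finitely many directed elements. -/
lemma painting (M : Matroid α) [M.Finitary] (O Ostar : Set (α → ℤ))
    (hor : IsOrientation M O Ostar) (hbin : IsBinaryOrientation O Ostar)
    (e₀ : α) (he₀ : e₀ ∈ M.E) (A : Finset α) : ∀ B : Set α, e₀ ∉ A → e₀ ∉ B → (∀ e ∈ A, e ∉ B) →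
    (∃ C ∈ O, C e₀ = 1 ∧ Function.support C ⊆ insert e₀ (↑A ∪ B) ∧ ∀ e ∈ A, 0 ≤ C e) ∨
    (∃ D ∈ Ostar, D e₀ = 1 ∧ (∀ e ∈ B, D e = 0) ∧ ∀ e ∈ A, 0 ≤ D e) := by
  classical
  induction A using Finset.induction_on with
  | empty =>
    intro B _ hB _
    by_cases hcl : e₀ ∈ M.closure B
    · left
      obtain ⟨C, hCB, hC, heC⟩ := Matroid.exists_isCircuit_of_mem_closure hcl hB
      obtain ⟨g, hg, rfl, h1⟩ := hor.circuit_signature.exists_one (C := C) hC heC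
      exact ⟨g, hg, h1, by simpa using hCB, by simp⟩
    · right
      obtain ⟨K, hK, heK, hdj⟩ := exists_cocircuit_avoiding M B e₀ he₀ hcl
      obtain ⟨g, hg, rfl, h1⟩ := hor.cocircuit_signature.exists_one (C := K) hK heK
      refine ⟨g, hg, h1, fun e he => ?_, by simp⟩
      by_contra hne
      exact Set.disjoint_left.1 hdj hne he
  | insert a A ha ih =>
    intro B hA hB hAB
    have hae : e₀ ≠ a := fun h => hA (by simp [h])
    have hA' : e₀ ∉ A := fun h => hA (by simp [h])
    rcases ih B hA' hB (fun e he => hAB e (by simp [he])) with ⟨C, hC, h1, h2, h3⟩ | ⟨D, hD, hD1, hDB, hDA⟩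
    · left
      refine ⟨C, hC, h1, h2.trans ?_, ?_⟩
      · intro x hx
        simp only [Finset.coe_insert, mem_insert_iff, mem_union] at hx ⊢
        tauto
      · intro e he
        rcases Finset.mem_insert.1 he with rfl | he
        · have : e ∉ Function.support C := fun h => by
            have h4 := h2 h
            simp only [mem_insert_iff, mem_union, Finset.mem_coe] at h4
            have h5 := hAB e (by simp)
            grind
          simp at this
          exact this.ge
        · exact h3 e he
    rcases ih (insert a B) hA' (by simp [hae, hB]) (by grind) with
      ⟨C, hC, hC1, hCs, hCA⟩ | ⟨D', hD', hD1', hDB', hDA'⟩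
    swap
    · right
      refine ⟨D', hD', hD1', fun e he => hDB' e (mem_insert_of_mem _ he), fun e he => ?_⟩
      rcases Finset.mem_insert.1 he with rfl | he
      · exact (hDB' _ (mem_insert _ _)).ge
      · exact hDA' e he
    by_cases hDa : 0 ≤ D a
    · right
      refine ⟨D, hD, hD1, hDB, fun e he => ?_⟩
      rcases Finset.mem_insert.1 he with rfl | he
      · exact hDa
      · exact hDA e he
    by_cases hCa : 0 ≤ C a
    · left
      refine ⟨C, hC, hC1, hCs.trans ?_, fun e he => ?_⟩
      · intro x hx
        simp only [Finset.coe_insert, mem_insert_iff, mem_union] at hx ⊢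
        tauto
      · rcases Finset.mem_insert.1 he with rfl | he
        · exact hCa
        · exact hCA e he
    exfalso
    have hsum := hbin C hC D hD
    have hfin : (Function.support fun e => C e * D e).Finite := by
      have hCc : M.IsCircuit (Function.support C) := hor.circuit_signature.dom_mem C hC
      exact hCc.finite.subset (fun e he => by
        simp only [Function.mem_support] at he ⊢
        exact left_ne_zero_of_mul he)
    have hpos : 0 < ∑ᶠ e, C e * D e := by
      refine finsum_pos (fun e => ?_) ⟨e₀, by simp [hC1, hD1]⟩ hfin
      by_cases he : C e = 0
      · simp [he]
      have h4 := hCs he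
      simp only [mem_insert_iff, mem_union, Finset.mem_coe] at h4
      rcases h4 with rfl | h4 | rfl | h4
      · simp [hC1, hD1]
      · exact mul_nonneg (hCA e h4) (hDA e h4)
      · push Not at hDa hCa
        exact (mul_pos_of_neg_of_neg hCa hDa).le
      · simp [hDB e h4]
    omega

/-- If no positive signed circuit of a finitary binary oriented matroid goes through
`e₀`, then there is a set `F ⊆ E` containing `e₀` such that
`∑_{e ∈ F ∩ dom C} C(e) = 0` for every signed circuit `C ∈ O`. -/
theorem exists_zero_sum_set (M : Matroid α) [M.Finitary] (O Ostar : Set (α → ℤ))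
    (hor : IsOrientation M O Ostar) (hbin : IsBinaryOrientation O Ostar)
    (e₀ : α) (he₀ : e₀ ∈ M.E)
    (hno : ¬ ∃ C ∈ O, IsPositive C ∧ e₀ ∈ Function.support C) :
    ∃ F ⊆ M.E, e₀ ∈ F ∧ ∀ C ∈ O, ∑ᶠ e ∈ F, C e = 0 := by
  classical
  have key : ∀ X : Finset α, ∃ D ∈ Ostar, D e₀ = 1 ∧ ∀ e ∈ X, 0 ≤ D e := by
    intro X
    rcases painting M O Ostar hor hbin e₀ he₀ (X.erase e₀) ∅ (by simp) (by simp) (by simp) with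
      ⟨C, hC, h1, h2, h3⟩ | ⟨D, hD, h1, -, h3⟩
    · refine absurd ⟨C, hC, fun e he => ?_, by simp [h1]⟩ hno
      rcases h2 he with rfl | h4
      · exact h1
      · have h5 := h3 e (by simpa [and_comm] using h4)
        rcases hor.circuit_signature.signed C hC e he with h6 | h6
        · exact h6
        · omega
    · refine ⟨D, hD, h1, fun e he => ?_⟩
      by_cases h : e = e₀
      · subst h; omega
      · exact h3 e (by simp [h, he])
  choose D hD hD1 hDnn using key
  let U : Ultrafilter (Finset α) := Ultrafilter.of Filter.atTop
  have hU : (U : Filter (Finset α)) ≤ Filter.atTop := Ultrafilter.of_le _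
  refine ⟨{e | ∀ᶠ X in (U : Filter (Finset α)), D X e = 1}, ?_, ?_, ?_⟩
  · intro e he
    obtain ⟨X, hX⟩ := he.exists
    have hK : M✶.IsCircuit (Function.support (D X)) :=
      hor.cocircuit_signature.dom_mem _ (hD X)
    exact hK.subset_ground (by simp [hX])
  · exact Filter.Eventually.of_forall hD1
  · intro C hC
    have hCc : M.IsCircuit (Function.support C) := hor.circuit_signature.dom_mem C hC
    have hfin := hCc.finite
    have ev1 : ∀ᶠ X in (U : Filter (Finset α)), hfin.toFinset ⊆ X :=
      hU (Filter.eventually_ge_atTop hfin.toFinset)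
    have ev2 : ∀ᶠ X in (U : Filter (Finset α)), ∀ e ∈ hfin.toFinset,
        ((∀ᶠ Y in (U : Filter (Finset α)), D Y e = 1) ↔ D X e = 1) := by
      rw [Filter.eventually_all_finset]
      intro e _
      by_cases h : ∀ᶠ Y in (U : Filter (Finset α)), D Y e = 1
      · filter_upwards [h] with X hX
        simp [h, hX]
      · have h' := Ultrafilter.eventually_not.2 h
        filter_upwards [h'] with X hX
        simp [h, hX]
    obtain ⟨X, hX1, hX2⟩ := (ev1.and ev2).exists
    rw [← hbin C hC (D X) (hD X)]
    refine finsum_congr fun e => ?_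
    by_cases he : C e = 0
    · simp [he]
    have heX : e ∈ hfin.toFinset := by simpa using he
    have h2 : e ∈ {e | ∀ᶠ X in (U : Filter (Finset α)), D X e = 1} ↔ D X e = 1 := hX2 e heX
    by_cases h1 : D X e = 1
    · rw [finsum_eq_if, if_pos (h2.2 h1), h1, mul_one]
    · rw [finsum_eq_if, if_neg (fun h => h1 (h2.1 h))]
      have h0 : D X e = 0 := by
        by_contra hne
        rcases hor.cocircuit_signature.signed _ (hD X) e hne with h3 | h3
        · exact h1 h3
        · have := hDnn X e (hX1 heX)
          omega
      simp [h0]
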